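/- Let (Ω, μ) be a probability space, F : Ω → Ω a measure-preserving map, and 𝓛 : L²(μ) → L²(μ) a linear map satisfying ∫ (𝓛g)·h dμ = ∫ g·(h∘F) dμ for all g, h ∈ L²(μ). Then for every v ∈ L²(μ) and every integer N ≥ 1: ∫∫ (v(y) − v(y′))² dμ(y) dμ(y′) = 2 Σ_{k=0}^{N−1} ∫ ((𝓛^k v)(y) − ((𝓛^{k+1} v)∘F)(y))² dμ(y) + ∫∫ ((𝓛^N v)(y) − (𝓛^N v)(y′))² dμ(y) dμ(y′). -/

import Mathlib

/-!
For `w ∈ L²(μ)`, expanding the square gives `∫∫ (w y - w y')² = 2 (∫ w² - (∫ w)²)`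
(`integral_prod_sub_sq`). Duality against `1` shows that `𝓛` preserves the mean, and duality
against `𝓛 g`, together with the invariance of `μ`, gives the Pythagorean identity
`∫ (g - (𝓛 g) ∘ F)² = ∫ g² - ∫ (𝓛 g)²` (`integral_sub_comp_sq`). Hence passing from `g` to `𝓛 g`
lowers the double integral by exactly twice that defect, and the sum over `k` telescopes.
-/

open MeasureTheory

/-- Twice the variance as a double integral over independent copies. -/
lemma integral_prod_sub_sq {Ω : Type*} [MeasurableSpace Ω] (μ : Measure Ω)
    [IsProbabilityMeasure μ] {w : Ω → ℝ} (hw : MemLp w 2 μ) :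
    ∫ p : Ω × Ω, (w p.1 - w p.2) ^ 2 ∂(μ.prod μ) =
      2 * (∫ x, w x ^ 2 ∂μ - (∫ x, w x ∂μ) ^ 2) := by
  have h1 : Integrable w μ := hw.integrable (by norm_num)
  have h2 : Integrable (fun x => w x ^ 2) μ := hw.integrable_sq
  have hA : Integrable (fun p : Ω × Ω => w p.1 ^ 2) (μ.prod μ) := h2.comp_fst μ
  have hB : Integrable (fun p : Ω × Ω => w p.2 ^ 2) (μ.prod μ) := h2.comp_snd μ
  have hC : Integrable (fun p : Ω × Ω => w p.1 * w p.2) (μ.prod μ) := h1.mul_prod h1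
  have eA : ∫ p : Ω × Ω, w p.1 ^ 2 ∂(μ.prod μ) = ∫ x, w x ^ 2 ∂μ := by
    simpa using integral_fun_fst (μ := μ) (ν := μ) (fun x => w x ^ 2)
  have eB : ∫ p : Ω × Ω, w p.2 ^ 2 ∂(μ.prod μ) = ∫ x, w x ^ 2 ∂μ := by
    simpa using integral_fun_snd (μ := μ) (ν := μ) (fun x => w x ^ 2)
  have eC : ∫ p : Ω × Ω, w p.1 * w p.2 ∂(μ.prod μ) = (∫ x, w x ∂μ) * ∫ x, w x ∂μ :=
    integral_prod_mul w w
  calc ∫ p : Ω × Ω, (w p.1 - w p.2) ^ 2 ∂(μ.prod μ)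
      = ∫ p : Ω × Ω, ((w p.1 ^ 2 + w p.2 ^ 2) - 2 * (w p.1 * w p.2)) ∂(μ.prod μ) := by
        congr 1; ext p; ring
    _ = _ := by
        rw [integral_sub (hA.fun_add hB) (hC.const_mul 2), integral_add hA hB,
          integral_const_mul, eA, eB, eC]
        ring

/-- Pythagoras in `L²(μ)`: since `μ` is invariant, `hdual` says that `g - u ∘ F` is orthogonal
to `u ∘ F`. It is applied with `u = 𝓛 g`. -/
lemma integral_sub_comp_sq {Ω : Type*} [MeasurableSpace Ω] (μ : Measure Ω)
    {F : Ω → Ω} (hF : MeasurePreserving F μ μ) {g u : Ω → ℝ}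
    (hg : MemLp g 2 μ) (hu : MemLp u 2 μ)
    (hdual : ∫ x, u x * u x ∂μ = ∫ x, g x * u (F x) ∂μ) :
    ∫ x, (g x - u (F x)) ^ 2 ∂μ = ∫ x, g x ^ 2 ∂μ - ∫ x, u x ^ 2 ∂μ := by
  have huF : MemLp (fun x => u (F x)) 2 μ := hu.comp_measurePreserving hF
  have eF : ∫ x, u (F x) ^ 2 ∂μ = ∫ x, u x ^ 2 ∂μ := by
    have hmeas : AEStronglyMeasurable (fun x => u x ^ 2) (μ.map F) := by
      rw [hF.map_eq]; exact hu.integrable_sq.aestronglyMeasurable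
    have h := integral_map hF.measurable.aemeasurable hmeas
    rw [hF.map_eq] at h
    exact h.symm
  have hC : Integrable (fun x => g x * u (F x)) μ := hg.integrable_mul huF
  calc ∫ x, (g x - u (F x)) ^ 2 ∂μ
      = ∫ x, ((g x ^ 2 + u (F x) ^ 2) - 2 * (g x * u (F x))) ∂μ := by
        congr 1; ext x; ring
    _ = _ := by
        rw [integral_sub (hg.integrable_sq.fun_add huF.integrable_sq) (hC.const_mul 2),
          integral_add hg.integrable_sq huF.integrable_sq, integral_const_mul, eF, ← hdual]
        simp only [← pow_two]
        ring

/-- For a transfer operator `𝓛` dual to a measure-preserving map `F` on a probability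
space, any `v ∈ L²(μ)` and any `N ≥ 1`:
`∫∫ (v y - v y')² = 2 ∑_{k=0}^{N-1} ∫ ((𝓛^k v) y - (𝓛^{k+1} v)(F y))² dμ(y)
  + ∫∫ ((𝓛^N v) y - (𝓛^N v) y')²`. -/
theorem stmt7 {Ω : Type*} [MeasurableSpace Ω] (μ : Measure Ω) [IsProbabilityMeasure μ]
    (F : Ω → Ω) (hF : MeasurePreserving F μ μ)
    (L : Lp ℝ 2 μ →ₗ[ℝ] Lp ℝ 2 μ)
    (hdual : ∀ g h : Lp ℝ 2 μ,
      ∫ x, (L g : Ω → ℝ) x * (h : Ω → ℝ) x ∂μ =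
        ∫ x, (g : Ω → ℝ) x * (h : Ω → ℝ) (F x) ∂μ) :
    ∀ (v : Lp ℝ 2 μ) (N : ℕ), 1 ≤ N →
      ∫ p : Ω × Ω, ((v : Ω → ℝ) p.1 - (v : Ω → ℝ) p.2) ^ 2 ∂(μ.prod μ) =
        2 * (∑ k ∈ Finset.range N,
            ∫ x, (((⇑L)^[k] v : Ω → ℝ) x - ((⇑L)^[k + 1] v : Ω → ℝ) (F x)) ^ 2 ∂μ) +
          ∫ p : Ω × Ω,
            (((⇑L)^[N] v : Ω → ℝ) p.1 - ((⇑L)^[N] v : Ω → ℝ) p.2) ^ 2 ∂(μ.prod μ) := by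
  intro v N hN
  have hmean : ∀ g : Lp ℝ 2 μ, ∫ x, (L g : Ω → ℝ) x ∂μ = ∫ x, (g : Ω → ℝ) x ∂μ := by
    intro g
    have hc : MemLp (fun _ : Ω => (1 : ℝ)) 2 μ := memLp_const 1
    have h1 := hc.coeFn_toLp
    have h2 := hF.quasiMeasurePreserving.ae h1
    have h := hdual g hc.toLp
    calc ∫ x, (L g : Ω → ℝ) x ∂μ
        = ∫ x, (L g : Ω → ℝ) x * (hc.toLp : Ω → ℝ) x ∂μ :=
          integral_congr_ae (by filter_upwards [h1] with x hx; rw [hx, mul_one])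
      _ = ∫ x, (g : Ω → ℝ) x * (hc.toLp : Ω → ℝ) (F x) ∂μ := h
      _ = ∫ x, (g : Ω → ℝ) x ∂μ :=
          integral_congr_ae (by filter_upwards [h2] with x hx; rw [hx, mul_one])
  -- The identity is trivially true at `N = 0`, so the induction starts there.
  clear hN
  induction N with
  | zero => simp
  | succ n ih =>
    rw [ih, Finset.sum_range_succ]
    have hs := integral_sub_comp_sq μ hF (Lp.memLp ((⇑L)^[n] v)) (Lp.memLp (L ((⇑L)^[n] v)))
      (hdual _ _)
    rw [Function.iterate_succ_apply' (⇑L) n v, hs,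
      integral_prod_sub_sq μ (Lp.memLp ((⇑L)^[n] v)),
      integral_prod_sub_sq μ (Lp.memLp (L ((⇑L)^[n] v))), hmean]
    ring
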